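/- arXiv:2009.02896 — 2 statements merged into one kernel-verified Lean document; each statement's English description precedes it below -/
import Mathlib

section
/- Let d ≥ 1 be an integer, s > d, C₀ > 0, and let a, b : ℤ^d → ℂ satisfy |a(m)| ≤ C₀ (1 + |m|)^{−s} and |b(m)| ≤ C₀ (1 + |m|)^{−s} for all m ∈ ℤ^d. Then there exists a constant C = C(s, d) > 0, independent of a, b, p, q, such that for all p, q ∈ ℤ^d one has Σ_{ℓ ∈ ℤ^d} |a(p + ℓ)| |b(q + ℓ)| ≤ C C₀² (1 + |p − q|)^{−s}. -/
/-- Euclidean norm of a lattice point `n ∈ ℤ^d`, viewed as a vector in `ℝ^d`. -/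
noncomputable def latNorm {d : ℕ} (n : Fin d → ℤ) : ℝ :=
  Real.sqrt (∑ i, ((n i : ℝ)) ^ 2)

/-!
The sum is dominated by a correlation of the weight `(1 + |m|) ^ (-s)` with itself. By the triangle
inequality, `1 + |p - q|` is at most twice the larger of `1 + |p + ℓ|` and `1 + |q + ℓ|`, so one of
the two factors is always at most `2 ^ s * (1 + |p - q|) ^ (-s)`. What remains is a translate of the
weight, which is summable over `ℤ^d` because `s > d`.
-/

lemma rpow_neg_mul_rpow_neg_le {u v w s : ℝ} (hu : 0 < u) (hv : 0 < v) (hw : 0 < w) (hs : 0 ≤ s)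
    (h : w ≤ u + v) :
    u ^ (-s) * v ^ (-s) ≤ 2 ^ s * w ^ (-s) * (u ^ (-s) + v ^ (-s)) := by
  wlog huv : u ≤ v generalizing u v
  · simpa only [mul_comm, add_comm] using this hv hu (by linarith) (le_of_not_ge huv)
  have v_le : v ^ (-s) ≤ 2 ^ s * w ^ (-s) := calc
    v ^ (-s) ≤ (2⁻¹ * w) ^ (-s) :=
      Real.rpow_le_rpow_of_nonpos (by positivity) (by linarith) (by linarith)
    _ = 2 ^ s * w ^ (-s) := by
      rw [Real.mul_rpow (by norm_num) hw.le, Real.inv_rpow zero_le_two,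
        Real.rpow_neg zero_le_two, inv_inv]
  calc u ^ (-s) * v ^ (-s) ≤ u ^ (-s) * (2 ^ s * w ^ (-s)) := by gcongr
    _ = 2 ^ s * w ^ (-s) * u ^ (-s) := mul_comm _ _
    _ ≤ 2 ^ s * w ^ (-s) * (u ^ (-s) + v ^ (-s)) := by
      gcongr
      exact le_add_of_nonneg_right (by positivity)

section AddGroupSeminorm

variable {G : Type*} [AddGroup G] (N : AddGroupSeminorm G) {s : ℝ}

lemma one_add_addGroupSeminorm_pos (x : G) : 0 < 1 + N x :=
  add_pos_of_pos_of_nonneg one_pos (apply_nonneg N x)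

lemma one_add_addGroupSeminorm_rpow_pos (x : G) (r : ℝ) : 0 < (1 + N x) ^ r :=
  Real.rpow_pos_of_pos (one_add_addGroupSeminorm_pos N x) r

lemma one_add_rpow_neg_mul_one_add_rpow_neg_le (hs : 0 ≤ s) (x y : G) :
    (1 + N x) ^ (-s) * (1 + N y) ^ (-s) ≤
      2 ^ s * (1 + N (x - y)) ^ (-s) * ((1 + N x) ^ (-s) + (1 + N y) ^ (-s)) := by
  refine rpow_neg_mul_rpow_neg_le (one_add_addGroupSeminorm_pos N x)
    (one_add_addGroupSeminorm_pos N y) (one_add_addGroupSeminorm_pos N _) hs ?_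
  linarith [map_sub_le_add N x y]

lemma norm_mul_norm_le_of_norm_le_one_add_rpow_neg {E F : Type*} [SeminormedAddGroup E]
    [SeminormedAddGroup F] (hs : 0 ≤ s) {A B : ℝ} {a : G → E} {b : G → F}
    (ha : ∀ x, ‖a x‖ ≤ A * (1 + N x) ^ (-s)) (hb : ∀ x, ‖b x‖ ≤ B * (1 + N x) ^ (-s)) (x y : G) :
    ‖a x‖ * ‖b y‖ ≤
      2 ^ s * (A * B) * (1 + N (x - y)) ^ (-s) * ((1 + N x) ^ (-s) + (1 + N y) ^ (-s)) := by
  have weight_pos (z : G) := one_add_addGroupSeminorm_rpow_pos N z (-s)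
  have hA : 0 ≤ A := nonneg_of_mul_nonneg_left ((norm_nonneg _).trans (ha 0)) (weight_pos 0)
  have hB : 0 ≤ B := nonneg_of_mul_nonneg_left ((norm_nonneg _).trans (hb 0)) (weight_pos 0)
  calc ‖a x‖ * ‖b y‖ ≤ (A * (1 + N x) ^ (-s)) * (B * (1 + N y) ^ (-s)) :=
        mul_le_mul (ha x) (hb y) (norm_nonneg _) (mul_nonneg hA (weight_pos x).le)
    _ = A * B * ((1 + N x) ^ (-s) * (1 + N y) ^ (-s)) := by ring
    _ ≤ A * B * (2 ^ s * (1 + N (x - y)) ^ (-s) * ((1 + N x) ^ (-s) + (1 + N y) ^ (-s))) :=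
        mul_le_mul_of_nonneg_left (one_add_rpow_neg_mul_one_add_rpow_neg_le N hs x y)
          (mul_nonneg hA hB)
    _ = _ := by ring

theorem stmt6_general (hs : 0 ≤ s) (hN : Summable fun x ↦ (1 + N x) ^ (-s)) :
    ∃ C : ℝ, 0 < C ∧ ∀ {E F : Type*} [SeminormedAddGroup E] [SeminormedAddGroup F] {A B : ℝ}
      {a : G → E} {b : G → F},
      (∀ x, ‖a x‖ ≤ A * (1 + N x) ^ (-s)) → (∀ x, ‖b x‖ ≤ B * (1 + N x) ^ (-s)) → ∀ p q : G,
        (Summable fun ℓ ↦ ‖a (p + ℓ)‖ * ‖b (q + ℓ)‖) ∧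
        ∑' ℓ, ‖a (p + ℓ)‖ * ‖b (q + ℓ)‖ ≤ C * (A * B) * (1 + N (p - q)) ^ (-s) := by
  have weight_pos (x : G) := one_add_addGroupSeminorm_rpow_pos N x (-s)
  have tsum_pos : 0 < ∑' x, (1 + N x) ^ (-s) :=
    hN.tsum_pos (fun x ↦ (weight_pos x).le) 0 (weight_pos 0)
  refine ⟨2 ^ s * (2 * ∑' x, (1 + N x) ^ (-s)), by positivity, ?_⟩
  intro E F _ _ A B a b ha hb p q
  have term_le (ℓ : G) : ‖a (p + ℓ)‖ * ‖b (q + ℓ)‖ ≤ 2 ^ s * (A * B) * (1 + N (p - q)) ^ (-s) *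
      ((1 + N (p + ℓ)) ^ (-s) + (1 + N (q + ℓ)) ^ (-s)) := by
    simpa only [add_sub_add_right_eq_sub] using
      norm_mul_norm_le_of_norm_le_one_add_rpow_neg N hs ha hb (p + ℓ) (q + ℓ)
  have hasSum_translate (x : G) :
      HasSum (fun ℓ ↦ (1 + N (x + ℓ)) ^ (-s)) (∑' y, (1 + N y) ^ (-s)) :=
    (Equiv.addLeft x).hasSum_iff.mpr hN.hasSum
  have hasSum_bound := ((hasSum_translate p).add (hasSum_translate q)).mul_left
    (2 ^ s * (A * B) * (1 + N (p - q)) ^ (-s))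
  have summable_mul : Summable fun ℓ ↦ ‖a (p + ℓ)‖ * ‖b (q + ℓ)‖ :=
    hasSum_bound.summable.of_nonneg_of_le (fun ℓ ↦ by positivity) term_le
  refine ⟨summable_mul, (hasSum_le term_le summable_mul.hasSum hasSum_bound).trans_eq ?_⟩
  ring

end AddGroupSeminorm

lemma summable_one_add_norm_rpow_neg {E : Type*} [NormedAddCommGroup E] [NormedSpace ℝ E]
    [FiniteDimensional ℝ E] (L : Submodule ℤ E) [DiscreteTopology L] {s : ℝ}
    (hs : Module.finrank ℤ L < s) : Summable fun x : L ↦ (1 + ‖x‖) ^ (-s) := by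
  have hs₀ : 0 ≤ s := (Nat.cast_nonneg _).trans hs.le
  refine (ZLattice.summable_norm_rpow L (-s) (neg_lt_neg hs)).of_norm_bounded_eventually ?_
  -- The origin is left out: there `‖0‖ ^ (-s)` is the junk value `0`.
  filter_upwards [(Set.finite_singleton (0 : L)).compl_mem_cofinite] with x hx
  have norm_pos : 0 < ‖x‖ := norm_pos_iff.mpr hx
  rw [Real.norm_of_nonneg (by positivity)]
  exact Real.rpow_le_rpow_of_nonpos norm_pos (by linarith) (neg_nonpos.mpr hs₀)

/-- The identification of `ℤ^d` with the lattice of integral points of Euclidean space, used to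
read `latNorm` as a norm of vectors. -/
noncomputable def integerLatticeEquiv (d : ℕ) :
    (Fin d → ℤ) ≃ₗ[ℤ]
      Submodule.span ℤ (Set.range (EuclideanSpace.basisFun (Fin d) ℝ).toBasis) :=
  ((EuclideanSpace.basisFun (Fin d) ℝ).toBasis.restrictScalars ℤ).equivFun.symm

lemma integerLatticeEquiv_apply {d : ℕ} (n : Fin d → ℤ) (i : Fin d) :
    (integerLatticeEquiv d n : EuclideanSpace ℝ (Fin d)) i = n i := by
  let basis := (EuclideanSpace.basisFun (Fin d) ℝ).toBasis
  have repr_eq : (basis.restrictScalars ℤ).repr (integerLatticeEquiv d n) i = n i :=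
    congr_fun ((basis.restrictScalars ℤ).equivFun.apply_symm_apply n) i
  have coord_eq := basis.restrictScalars_repr_apply ℤ (integerLatticeEquiv d n) i
  rw [repr_eq] at coord_eq
  simpa [basis] using coord_eq.symm

lemma norm_integerLatticeEquiv {d : ℕ} (n : Fin d → ℤ) :
    ‖integerLatticeEquiv d n‖ = latNorm n := by
  rw [Submodule.coe_norm, EuclideanSpace.norm_eq]
  simp only [integerLatticeEquiv_apply, Real.norm_eq_abs, sq_abs, latNorm]

/-- `latNorm` bundled as a seminorm on the group `ℤ^d`. -/
noncomputable def latSeminorm (d : ℕ) : AddGroupSeminorm (Fin d → ℤ) where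
  toFun := latNorm
  map_zero' := by simp [latNorm]
  add_le' m n := by simpa only [← norm_integerLatticeEquiv, map_add] using norm_add_le _ _
  neg' n := by simp [latNorm]

lemma summable_one_add_latNorm_rpow_neg {d : ℕ} {s : ℝ} (hs : d < s) :
    Summable fun n : Fin d → ℤ ↦ (1 + latNorm n) ^ (-s) := by
  have finrank_eq : Module.finrank ℤ
      (Submodule.span ℤ (Set.range (EuclideanSpace.basisFun (Fin d) ℝ).toBasis)) = d := by
    rw [← (integerLatticeEquiv d).finrank_eq, Module.finrank_fin_fun]
  simpa only [Function.comp_def, LinearEquiv.coe_toEquiv, norm_integerLatticeEquiv] using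
    (integerLatticeEquiv d).toEquiv.summable_iff.mpr
      (summable_one_add_norm_rpow_neg _ (by rwa [finrank_eq]))

/-- For `d ≥ 1`, `s > d`, `C₀ > 0` and `a, b : ℤ^d → ℂ` with
`|a(m)|, |b(m)| ≤ C₀ (1 + |m|)^{−s}`, there is `C = C(s, d) > 0`, independent of
`a, b, p, q`, such that `∑_ℓ |a(p + ℓ)| |b(q + ℓ)| ≤ C C₀² (1 + |p − q|)^{−s}`. -/
theorem stmt6 (d : ℕ) (hd : 1 ≤ d) (s : ℝ) (hs : (d : ℝ) < s) :
    ∃ C : ℝ, 0 < C ∧ ∀ (C₀ : ℝ), 0 < C₀ → ∀ a b : (Fin d → ℤ) → ℂ,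
      (∀ m : Fin d → ℤ, ‖a m‖ ≤ C₀ * (1 + latNorm m) ^ (-s)) →
      (∀ m : Fin d → ℤ, ‖b m‖ ≤ C₀ * (1 + latNorm m) ^ (-s)) →
      ∀ p q : Fin d → ℤ,
        (Summable fun ℓ : Fin d → ℤ => ‖a (p + ℓ)‖ * ‖b (q + ℓ)‖) ∧
        (∑' ℓ : Fin d → ℤ, ‖a (p + ℓ)‖ * ‖b (q + ℓ)‖)
          ≤ C * C₀ ^ 2 * (1 + latNorm (p - q)) ^ (-s) := by
  obtain ⟨C, hC, bound⟩ := stmt6_general (latSeminorm d) ((Nat.cast_nonneg d).trans hs.le)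
    (summable_one_add_latNorm_rpow_neg hs)
  exact ⟨C, hC, fun C₀ _ a b ha hb p q ↦ sq C₀ ▸ bound ha hb p q⟩
end

section
/- Let d ≥ 1 be an integer and s > d/2. Then there exists a constant C = C(d, s) > 0 such that for every a : ℤ^d → ℂ with ‖a‖_{ℓ²_s} < ∞, the correlation function a_*(p) := Σ_{m ∈ ℤ^d} |a(m)| |a(m + p)| is well defined (the series converges) and satisfies Σ_{p ∈ ℤ^d} (1 + |p|)^{2s} |a_*(p)|² ≤ C ‖a‖⁴_{ℓ²_s}; that is, ‖a_*‖_{ℓ²_s} ≤ C ‖a‖²_{ℓ²_s}. -/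
/-!
Cauchy-Schwarz with the splitting `|a(m)| |b(m + p)| = (w(m) w(m + p))^{1/2} |a(m)| |b(m + p)| ·
(w(m) w(m + p))^{-1/2}` bounds the squared correlation at `p` by the product of the correlation of
`w |a|²` with `w |b|²`, whose sum over `p` is `(∑ w |a|²) (∑ w |b|²)`, and the autocorrelation of
`w⁻¹`. A weight with `w(p) ≤ K (w(m) + w(m + p))` and `∑ w⁻¹ < ∞` has
`w(p) / (w(m) w(m + p)) ≤ K (1 / w(m + p) + 1 / w(m))`, so that the second factor is
`O(1 / w(p))`. The weight `(1 + |n|)^{2s}` on `ℤ^d` is of this kind as soon as `s > d / 2`.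
-/

lemma summable_and_sq_tsum_le_of_sq_le_mul {ι : Type*} {h F G : ι → ℝ} (hh : 0 ≤ h)
    (hF₀ : 0 ≤ F) (hG₀ : 0 ≤ G) (hFG : ∀ i, h i ^ 2 ≤ F i * G i) (hF : Summable F)
    (hG : Summable G) :
    Summable h ∧ (∑' i, h i) ^ 2 ≤ (∑' i, F i) * ∑' i, G i := by
  have hprod : 0 ≤ (∑' i, F i) * ∑' i, G i := mul_nonneg (tsum_nonneg hF₀) (tsum_nonneg hG₀)
  have hpartial (t : Finset ι) : ∑ i ∈ t, h i ≤ √((∑' i, F i) * ∑' i, G i) := by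
    refine Real.le_sqrt_of_sq_le ?_
    calc (∑ i ∈ t, h i) ^ 2
        ≤ (∑ i ∈ t, F i) * ∑ i ∈ t, G i :=
          Finset.sum_sq_le_sum_mul_sum_of_sq_le_mul t (fun i _ ↦ hF₀ i) (fun i _ ↦ hG₀ i)
            fun i _ ↦ hFG i
      _ ≤ (∑' i, F i) * ∑' i, G i :=
          mul_le_mul (hF.sum_le_tsum t fun i _ ↦ hF₀ i) (hG.sum_le_tsum t fun i _ ↦ hG₀ i)
            (Finset.sum_nonneg fun i _ ↦ hG₀ i) (tsum_nonneg hF₀)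
  refine ⟨summable_of_sum_le hh hpartial, ?_⟩
  calc (∑' i, h i) ^ 2
      ≤ √((∑' i, F i) * ∑' i, G i) ^ 2 :=
        pow_le_pow_left₀ (tsum_nonneg hh) (Real.tsum_le_of_sum_le hh hpartial) 2
    _ = (∑' i, F i) * ∑' i, G i := Real.sq_sqrt hprod

section Correlation

variable {G : Type*} [AddGroup G] {f g : G → ℝ}

/-- The correlation `p ↦ ∑ m, f m * g (m + p)` of two real functions on a discrete group, that is,
the convolution of the reflection of `f` with `g`. Its value is `0` where the series diverges. -/
noncomputable def correlation (f g : G → ℝ) (p : G) : ℝ :=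
  ∑' m, f m * g (m + p)

lemma correlation_nonneg (hf : 0 ≤ f) (hg : 0 ≤ g) : 0 ≤ correlation f g :=
  fun _ ↦ tsum_nonneg fun _ ↦ mul_nonneg (hf _) (hg _)

/-- The change of variables `(p, m) ↦ (m, m + p)`, which turns the double series
`∑ p, ∑ m, f m * g (m + p)` into `∑ x, ∑ y, f x * g y`. -/
def correlationEquiv (G : Type*) [AddGroup G] : G × G ≃ G × G :=
  (Equiv.prodComm G G).trans ((Equiv.refl G).prodShear Equiv.addLeft)

lemma summable_prod_mul_add (hf : Summable f) (hg : Summable g) :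
    Summable fun x : G × G ↦ f x.2 * g (x.2 + x.1) :=
  (correlationEquiv G).summable_iff.2 (summable_mul_of_summable_norm hf.norm hg.norm)

lemma summable_mul_add (hf : Summable f) (hg : Summable g) (p : G) :
    Summable fun m ↦ f m * g (m + p) :=
  (summable_prod_mul_add hf hg).prod_factor p

lemma summable_correlation (hf : Summable f) (hg : Summable g) : Summable (correlation f g) :=
  (summable_prod_mul_add hf hg).prod

lemma tsum_correlation (hf : Summable f) (hg : Summable g) :
    ∑' p, correlation f g p = (∑' n, f n) * ∑' n, g n := by
  rw [tsum_mul_tsum_of_summable_norm hf.norm hg.norm, ← (correlationEquiv G).tsum_eq]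
  exact (summable_prod_mul_add hf hg).tsum_prod.symm

end Correlation

section Weight

variable {G : Type*} [AddGroup G] {w : G → ℝ} {K : ℝ}

lemma mul_correlation_inv_inv_le (hw : ∀ n, 0 < w n)
    (hK : ∀ m p, w p ≤ K * (w m + w (m + p))) (hS : Summable w⁻¹) (p : G) :
    w p * correlation w⁻¹ w⁻¹ p ≤ 2 * K * ∑' n, (w n)⁻¹ := by
  have hshift : Summable fun m ↦ w⁻¹ (m + p) := (Equiv.addRight p).summable_iff.2 hS
  have htsum_shift : ∑' m, w⁻¹ (m + p) = ∑' n, w⁻¹ n := (Equiv.addRight p).tsum_eq w⁻¹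
  have hterm (m : G) : w p * (w⁻¹ m * w⁻¹ (m + p)) ≤ K * (w⁻¹ (m + p) + w⁻¹ m) := by
    have hm := hw m
    have hmp := hw (m + p)
    calc w p * ((w m)⁻¹ * (w (m + p))⁻¹)
        ≤ K * (w m + w (m + p)) * ((w m)⁻¹ * (w (m + p))⁻¹) := by gcongr; exact hK m p
      _ = K * ((w (m + p))⁻¹ + (w m)⁻¹) := by field_simp
  calc w p * correlation w⁻¹ w⁻¹ p
      = ∑' m, w p * (w⁻¹ m * w⁻¹ (m + p)) := tsum_mul_left.symm
    _ ≤ ∑' m, K * (w⁻¹ (m + p) + w⁻¹ m) :=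
        ((summable_mul_add hS hS p).mul_left _).tsum_le_tsum hterm ((hshift.add hS).mul_left _)
    _ = 2 * K * ∑' n, w⁻¹ n := by
        rw [tsum_mul_left, hshift.tsum_add hS, htsum_shift]
        ring

variable {f g : G → ℝ}

lemma summable_mul_add_and_sq_correlation_le (hw : ∀ n, 0 < w n) (hS : Summable w⁻¹)
    (hf₀ : 0 ≤ f) (hg₀ : 0 ≤ g) (hf : Summable (w * f ^ 2)) (hg : Summable (w * g ^ 2)) (p : G) :
    (Summable fun m ↦ f m * g (m + p)) ∧
      correlation f g p ^ 2 ≤ correlation (w * f ^ 2) (w * g ^ 2) p * correlation w⁻¹ w⁻¹ p := by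
  have hnonneg (h : G → ℝ) : 0 ≤ w * h ^ 2 := fun n ↦ mul_nonneg (hw n).le (sq_nonneg (h n))
  have hinv (n : G) : 0 ≤ w⁻¹ n := (inv_pos.2 (hw n)).le
  have hsplit (m : G) : (f m * g (m + p)) ^ 2 =
      (w * f ^ 2) m * (w * g ^ 2) (m + p) * (w⁻¹ m * w⁻¹ (m + p)) := by
    have hm := (hw m).ne'
    have hmp := (hw (m + p)).ne'
    simp only [Pi.mul_apply, Pi.pow_apply, Pi.inv_apply]
    field_simp
  exact summable_and_sq_tsum_le_of_sq_le_mul (fun m ↦ mul_nonneg (hf₀ m) (hg₀ (m + p)))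
    (fun m ↦ mul_nonneg (hnonneg f m) (hnonneg g (m + p)))
    (fun m ↦ mul_nonneg (hinv m) (hinv (m + p))) (fun m ↦ (hsplit m).le)
    (summable_mul_add hf hg p) (summable_mul_add hS hS p)

lemma mul_sq_correlation_le (hw : ∀ n, 0 < w n) (hK : ∀ m p, w p ≤ K * (w m + w (m + p)))
    (hS : Summable w⁻¹) (hf₀ : 0 ≤ f) (hg₀ : 0 ≤ g) (hf : Summable (w * f ^ 2))
    (hg : Summable (w * g ^ 2)) (p : G) :
    w p * correlation f g p ^ 2 ≤
      2 * K * (∑' n, (w n)⁻¹) * correlation (w * f ^ 2) (w * g ^ 2) p := by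
  have hnonneg (h : G → ℝ) : 0 ≤ w * h ^ 2 := fun n ↦ mul_nonneg (hw n).le (sq_nonneg (h n))
  calc w p * correlation f g p ^ 2
      ≤ w p * (correlation (w * f ^ 2) (w * g ^ 2) p * correlation w⁻¹ w⁻¹ p) :=
        mul_le_mul_of_nonneg_left
          (summable_mul_add_and_sq_correlation_le hw hS hf₀ hg₀ hf hg p).2 (hw p).le
    _ = w p * correlation w⁻¹ w⁻¹ p * correlation (w * f ^ 2) (w * g ^ 2) p := by ring
    _ ≤ 2 * K * (∑' n, (w n)⁻¹) * correlation (w * f ^ 2) (w * g ^ 2) p :=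
        mul_le_mul_of_nonneg_right (mul_correlation_inv_inv_le hw hK hS p)
          (correlation_nonneg (hnonneg f) (hnonneg g) p)

lemma summable_mul_sq_correlation_and_tsum_le (hw : ∀ n, 0 < w n)
    (hK : ∀ m p, w p ≤ K * (w m + w (m + p))) (hS : Summable w⁻¹) (hf₀ : 0 ≤ f) (hg₀ : 0 ≤ g)
    (hf : Summable (w * f ^ 2)) (hg : Summable (w * g ^ 2)) :
    (Summable fun p ↦ w p * correlation f g p ^ 2) ∧
      ∑' p, w p * correlation f g p ^ 2 ≤
        2 * K * (∑' n, (w n)⁻¹) * ((∑' n, w n * f n ^ 2) * ∑' n, w n * g n ^ 2) := by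
  have hle := mul_sq_correlation_le hw hK hS hf₀ hg₀ hf hg
  have hbound := (summable_correlation hf hg).mul_left (2 * K * ∑' n, (w n)⁻¹)
  have hsum : Summable fun p ↦ w p * correlation f g p ^ 2 :=
    hbound.of_nonneg_of_le (fun p ↦ mul_nonneg (hw p).le (sq_nonneg _)) hle
  refine ⟨hsum, (hsum.tsum_le_tsum hle hbound).trans_eq ?_⟩
  simp only [tsum_mul_left, tsum_correlation hf hg, Pi.mul_apply, Pi.pow_apply]

theorem stmt14_general {E F : Type*} [SeminormedAddGroup E] [SeminormedAddGroup F]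
    (hw : ∀ n, 0 < w n) (hK : ∀ m p, w p ≤ K * (w m + w (m + p))) (hS : Summable w⁻¹) :
    ∃ C : ℝ, 0 < C ∧ ∀ (a : G → E) (b : G → F),
      (Summable fun n ↦ w n * ‖a n‖ ^ 2) → (Summable fun n ↦ w n * ‖b n‖ ^ 2) →
      (∀ p, Summable fun m ↦ ‖a m‖ * ‖b (m + p)‖) ∧
      (Summable fun p ↦ w p * (∑' m, ‖a m‖ * ‖b (m + p)‖) ^ 2) ∧
      ∑' p, w p * (∑' m, ‖a m‖ * ‖b (m + p)‖) ^ 2 ≤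
        C * ((∑' n, w n * ‖a n‖ ^ 2) * ∑' n, w n * ‖b n‖ ^ 2) := by
  have hK_pos : 0 < K :=
    pos_of_mul_pos_left ((hw 0).trans_le (hK 0 0)) (add_pos (hw 0) (hw (0 + 0))).le
  have hS_pos : 0 < ∑' n, (w n)⁻¹ :=
    hS.tsum_pos (fun n ↦ (inv_pos.2 (hw n)).le) 0 (inv_pos.2 (hw 0))
  refine ⟨2 * K * ∑' n, (w n)⁻¹, by positivity, fun a b ha hb ↦ ?_⟩
  have ha₀ : 0 ≤ fun n ↦ ‖a n‖ := fun n ↦ norm_nonneg (a n)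
  have hb₀ : 0 ≤ fun n ↦ ‖b n‖ := fun n ↦ norm_nonneg (b n)
  have hbound := summable_mul_sq_correlation_and_tsum_le hw hK hS ha₀ hb₀ ha hb
  exact ⟨fun p ↦ (summable_mul_add_and_sq_correlation_le hw hS ha₀ hb₀ ha hb p).1, hbound⟩

end Weight

lemma add_rpow_le_two_rpow_mul_add {x y r : ℝ} (hx : 0 ≤ x) (hy : 0 ≤ y) (hr : 0 ≤ r) :
    (x + y) ^ r ≤ 2 ^ r * (x ^ r + y ^ r) := by
  have hmax : max x y ^ r ≤ x ^ r + y ^ r := by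
    rcases max_choice x y with h | h <;> rw [h]
    · exact le_add_of_nonneg_right (Real.rpow_nonneg hy r)
    · exact le_add_of_nonneg_left (Real.rpow_nonneg hx r)
  calc (x + y) ^ r
      ≤ (2 * max x y) ^ r := by
        rw [two_mul]
        gcongr
        exacts [le_max_left x y, le_max_right x y]
    _ = 2 ^ r * max x y ^ r := Real.mul_rpow zero_le_two (hx.trans (le_max_left x y))
    _ ≤ 2 ^ r * (x ^ r + y ^ r) := by gcongr

section Lattice

variable {E : Type*} [NormedAddCommGroup E] [NormedSpace ℝ E]

lemma summable_one_add_norm_rpow [FiniteDimensional ℝ E] (L : Submodule ℤ E)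
    [DiscreteTopology L] {r : ℝ} (hr : r < -Module.finrank ℤ L) :
    Summable fun z : L ↦ (1 + ‖z‖) ^ r := by
  have hr_nonpos : r ≤ 0 := hr.le.trans (neg_nonpos.2 (Nat.cast_nonneg _))
  refine (ZLattice.summable_norm_rpow L r hr).of_norm_bounded_eventually ?_
  filter_upwards [(Set.finite_singleton (0 : L)).compl_mem_cofinite] with z hz
  rw [Real.norm_of_nonneg (by positivity)]
  exact Real.rpow_le_rpow_of_nonpos (norm_pos_iff.2 hz) (by linarith) hr_nonpos

lemma summable_one_add_norm_sum_smul_rpow {ι : Type*} [Fintype ι] (b : Module.Basis ι ℝ E)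
    {r : ℝ} (hr : r < -Fintype.card ι) :
    Summable fun n : ι → ℤ ↦ (1 + ‖∑ i, n i • b i‖) ^ r := by
  have : FiniteDimensional ℝ E := b.finiteDimensional_of_finite
  have hrank : Module.finrank ℤ (Submodule.span ℤ (Set.range b)) = Fintype.card ι :=
    Module.finrank_eq_card_basis (b.restrictScalars ℤ)
  have hlattice := summable_one_add_norm_rpow (Submodule.span ℤ (Set.range b)) (hrank ▸ hr)
  refine ((b.restrictScalars ℤ).equivFun.symm.toEquiv.summable_iff.2 hlattice).congr fun n ↦ ?_
  simp [Module.Basis.equivFun_symm_apply]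

end Lattice

section LatNorm

variable {d : ℕ}

lemma latNorm_nonneg (n : Fin d → ℤ) : 0 ≤ latNorm n :=
  Real.sqrt_nonneg _

lemma latNorm_eq_norm_sum_smul (n : Fin d → ℤ) :
    latNorm n = ‖∑ i, n i • (EuclideanSpace.basisFun (Fin d) ℝ).toBasis i‖ := by
  simp [latNorm, EuclideanSpace.norm_eq, Pi.single_apply]

lemma latNorm_le_add (m p : Fin d → ℤ) : latNorm p ≤ latNorm m + latNorm (m + p) := by
  simp only [latNorm_eq_norm_sum_smul, Pi.add_apply, add_smul, Finset.sum_add_distrib]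
  rw [add_comm]
  exact norm_le_add_norm_add' _ _

lemma one_add_latNorm_rpow_le {r : ℝ} (hr : 0 ≤ r) (m p : Fin d → ℤ) :
    (1 + latNorm p) ^ r ≤ 2 ^ r * ((1 + latNorm m) ^ r + (1 + latNorm (m + p)) ^ r) := by
  have hm := latNorm_nonneg m
  have hp := latNorm_nonneg p
  have hmp := latNorm_nonneg (m + p)
  have htri := latNorm_le_add m p
  calc (1 + latNorm p) ^ r
      ≤ (1 + latNorm m + (1 + latNorm (m + p))) ^ r :=
        Real.rpow_le_rpow (by positivity) (by linarith) hr
    _ ≤ 2 ^ r * ((1 + latNorm m) ^ r + (1 + latNorm (m + p)) ^ r) :=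
        add_rpow_le_two_rpow_mul_add (by positivity) (by positivity) hr

lemma one_add_latNorm_rpow_pos (r : ℝ) (n : Fin d → ℤ) : 0 < (1 + latNorm n) ^ r :=
  Real.rpow_pos_of_pos (add_pos_of_pos_of_nonneg one_pos (latNorm_nonneg n)) r

lemma summable_inv_one_add_latNorm_rpow {r : ℝ} (hr : d < r) :
    Summable (fun n : Fin d → ℤ ↦ (1 + latNorm n) ^ r)⁻¹ := by
  have hcard : -r < -Fintype.card (Fin d) := by simpa using hr
  refine (summable_one_add_norm_sum_smul_rpow
    (EuclideanSpace.basisFun (Fin d) ℝ).toBasis hcard).congr fun n ↦ ?_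
  rw [← latNorm_eq_norm_sum_smul, Pi.inv_apply,
    Real.rpow_neg (add_nonneg zero_le_one (latNorm_nonneg n))]

end LatNorm

/-- For `d ≥ 1` and `s > d/2` there is `C = C(d, s) > 0` such that for
every `a : ℤ^d → ℂ` with finite `ℓ²_s`-norm, the correlation
`a_*(p) = ∑_m |a(m)| |a(m + p)|` converges and satisfies
`∑_p (1 + |p|)^{2s} a_*(p)² ≤ C ‖a‖⁴_{ℓ²_s}`, i.e. `‖a_*‖_{ℓ²_s} ≤ √C ‖a‖²_{ℓ²_s}`
(here the constant `C` bounds the squared norm). -/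
theorem stmt14 (d : ℕ) (hd : 1 ≤ d) (s : ℝ) (hs : (d : ℝ) / 2 < s) :
    ∃ C : ℝ, 0 < C ∧ ∀ a : (Fin d → ℤ) → ℂ,
      (Summable fun n : Fin d → ℤ => (1 + latNorm n) ^ (2 * s) * ‖a n‖ ^ 2) →
      (∀ p : Fin d → ℤ, Summable fun m : Fin d → ℤ => ‖a m‖ * ‖a (m + p)‖) ∧
      (Summable fun p : Fin d → ℤ =>
        (1 + latNorm p) ^ (2 * s) * (∑' m : Fin d → ℤ, ‖a m‖ * ‖a (m + p)‖) ^ 2) ∧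
      (∑' p : Fin d → ℤ,
          (1 + latNorm p) ^ (2 * s) * (∑' m : Fin d → ℤ, ‖a m‖ * ‖a (m + p)‖) ^ 2)
        ≤ C * (∑' n : Fin d → ℤ, (1 + latNorm n) ^ (2 * s) * ‖a n‖ ^ 2) ^ 2 := by
  have hds : (d : ℝ) < 2 * s := by linarith
  obtain ⟨C, hC, hbound⟩ := stmt14_general (E := ℂ) (F := ℂ) (one_add_latNorm_rpow_pos (2 * s))
    (one_add_latNorm_rpow_le (d.cast_nonneg.trans hds.le)) (summable_inv_one_add_latNorm_rpow hds)
  exact ⟨C, hC, fun a ha ↦ by simpa only [← sq] using hbound a a ha ha⟩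
end
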